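/- arXiv:1402.2685 — 11 statements merged into one kernel-verified Lean document; each statement's English description precedes it below -/
import Mathlib

section
/- Let n ≥ 2 and let D be a compact convex body in Euclidean space ℝⁿ satisfying the R₁,R₂ ball-sandwich condition for some reals 0 < R₂ ≤ R₁. Then there exist a point o ∈ ℝⁿ and reals r, R with 0 ≤ r ≤ R such that Metric.closedBall o r ⊆ D ⊆ Metric.closedBall o R (so the boundary ∂D lies in the spherical shell between the concentric spheres of radii r and R centered at o) and R − r ≤ (√2 − 1)·(R₁ − R₂). -/
lemma le_of_sq_le_sq_aux {a b : ℝ} (h : a ^ 2 ≤ b ^ 2) (hb : 0 ≤ b) : a ≤ b :=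
  (le_abs_self a).trans (abs_le_of_sq_le_sq h hb)

open Metric in
lemma aux_circ {E : Type*} [NormedAddCommGroup E] [InnerProductSpace ℝ E]
    (C : Set E) (hC : IsCompact C) (hconv : Convex ℝ C) (hne : C.Nonempty) :
    ∃ o ∈ C, ∃ R : ℝ, 0 ≤ R ∧ (∀ c ∈ C, dist c o ≤ R) ∧
      ∀ x, ∃ c ∈ C, R ^ 2 + dist x o ^ 2 ≤ dist c x ^ 2 := by
  set F : E → ℝ := fun x => sSup ((fun c => ‖c - x‖ ^ 2) '' C) with hF
  have hcont : Continuous F := by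
    apply hC.continuous_sSup (f := fun x c => ‖c - x‖ ^ 2)
    simp only [Function.HasUncurry.uncurry, id]
    fun_prop
  have hmax : ∀ x, ∃ c ∈ C, F x = ‖c - x‖ ^ 2 ∧ ∀ c' ∈ C, ‖c' - x‖ ^ 2 ≤ F x := by
    intro x
    obtain ⟨c, hc, h1, h2⟩ := hC.exists_sSup_image_eq_and_ge hne
      (f := fun c => ‖c - x‖ ^ 2) (by fun_prop)
    exact ⟨c, hc, h1, fun c' hc' => (h2 c' hc').trans h1.ge⟩
  obtain ⟨o, hoC, ho⟩ := hC.exists_isMinOn hne hcont.continuousOn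
  have hmin : ∀ x, F o ≤ F x := by
    intro x
    obtain ⟨y, hy, hyx⟩ := exists_norm_eq_iInf_of_complete_convex hne hC.isComplete hconv x
    have hin := (norm_eq_iInf_iff_real_inner_le_zero hconv hy).1 hyx
    have h1 : F o ≤ F y := ho hy
    obtain ⟨c, hc, h2, -⟩ := hmax y
    obtain ⟨-, -, -, h3⟩ := hmax x
    have h4 := h3 c hc
    have h5 := hin c hc
    have h6 : c - x = (c - y) - (x - y) := by abel
    have h7 := norm_sub_sq_real (c - y) (x - y)
    rw [← h6, real_inner_comm] at h7
    nlinarith [sq_nonneg ‖x - y‖]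
  have hstr : ∀ x, F o + ‖x - o‖ ^ 2 ≤ F x := by
    intro x
    have key : ∀ t : ℝ, 0 < t → t < 1 → F o ≤ F x - (1 - t) * ‖x - o‖ ^ 2 := by
      intro t h0 h1
      obtain ⟨c, hc, h2, -⟩ := hmax (o + t • (x - o))
      obtain ⟨-, -, -, h3⟩ := hmax x
      obtain ⟨-, -, -, h4⟩ := hmax o
      have h5 := hmin (o + t • (x - o))
      have h3 := h3 c hc
      have h4 := h4 c hc
      have e1 : c - (o + t • (x - o)) = (c - o) - t • (x - o) := by abel
      have e2 : c - x = (c - o) - (x - o) := by abel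
      rw [h2, e1, norm_sub_sq_real, inner_smul_right, norm_smul, mul_pow,
        Real.norm_eq_abs, sq_abs] at h5
      rw [e2, norm_sub_sq_real] at h3
      have : 0 ≤ t * (F x - (1 - t) * ‖x - o‖ ^ 2 - F o) := by
        nlinarith [mul_le_mul_of_nonneg_left h3 h0.le, mul_le_mul_of_nonneg_left h4 (sub_nonneg.2 h1.le)]
      have := nonneg_of_mul_nonneg_right this h0
      linarith
    have hlim : Filter.Tendsto (fun t : ℝ => F x - (1 - t) * ‖x - o‖ ^ 2)
        (nhdsWithin 0 (Set.Ioi 0)) (nhds (F x - (1 - 0) * ‖x - o‖ ^ 2)) := by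
      apply Filter.Tendsto.mono_left _ nhdsWithin_le_nhds
      apply Continuous.tendsto (f := fun t : ℝ => F x - (1 - t) * ‖x - o‖ ^ 2)
      fun_prop
    have := ge_of_tendsto hlim (b := F o) (by
      filter_upwards [Ioo_mem_nhdsGT (show (0:ℝ) < 1 by norm_num)] with t ht
      exact key t ht.1 ht.2)
    linarith
  obtain ⟨c, hc, h1, h2⟩ := hmax o
  refine ⟨o, hoC, ‖c - o‖, norm_nonneg _, ?_, ?_⟩
  · intro c' hc'
    rw [dist_eq_norm]
    have := h2 c' hc'
    rw [h1] at this
    exact le_of_sq_le_sq_aux this (norm_nonneg _)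
  · intro x
    obtain ⟨c', hc', h3, -⟩ := hmax x
    refine ⟨c', hc', ?_⟩
    rw [dist_eq_norm, dist_eq_norm, ← h1, ← h3]
    exact hstr x

lemma aux_ball {E : Type*} [NormedAddCommGroup E] [InnerProductSpace ℝ E]
    (c x : E) (a b : ℝ) (ha : 0 < a) (hab : a ≤ b)
    (h : Metric.closedBall c a ⊆ Metric.closedBall x b) : dist c x ≤ b - a := by
  rw [dist_eq_norm]
  by_cases hcx : c - x = 0
  · rw [hcx, norm_zero]; linarith
  have hp : 0 < ‖c - x‖ := norm_pos_iff.2 hcx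
  have h1 : c + (a / ‖c - x‖) • (c - x) ∈ Metric.closedBall c a := by
    rw [Metric.mem_closedBall, dist_eq_norm, add_sub_cancel_left, norm_smul, Real.norm_eq_abs,
      abs_of_pos (by positivity), div_mul_cancel₀ _ hp.ne']
  have h2 := h h1
  have e : c + (a / ‖c - x‖) • (c - x) - x = (1 + a / ‖c - x‖) • (c - x) := by
    rw [add_smul, one_smul]; abel
  rw [Metric.mem_closedBall, dist_eq_norm, e, norm_smul, Real.norm_eq_abs,
    abs_of_pos (by positivity), add_mul, div_mul_cancel₀ _ hp.ne'] at h2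
  linarith

lemma aux_far {E : Type*} [NormedAddCommGroup E] [InnerProductSpace ℝ E] [Nontrivial E]
    (D : Set E) (hD : IsCompact D) (hne : D.Nonempty) (o : E) :
    ∃ p ∈ frontier D, ∀ q ∈ D, dist q o ≤ dist p o := by
  obtain ⟨p, hp, hm⟩ := hD.exists_isMaxOn hne (f := fun q => dist q o) (by fun_prop)
  have hm' : ∀ q ∈ D, dist q o ≤ dist p o := fun q hq => hm hq
  refine ⟨p, ⟨subset_closure hp, fun hi => ?_⟩, hm'⟩
  have h1 : D ⊆ Metric.closedBall o (dist p o) := fun q hq => hm' q hq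
  have h2 := interior_mono h1 hi
  rw [interior_closedBall'] at h2
  exact lt_irrefl _ (Metric.mem_ball.1 h2)


/-- Width estimate for κ₁,κ₂-convex domains in Euclidean space:
the boundary fits in a spherical shell of width at most (√2 − 1)(R₁ − R₂). -/
theorem width_estimate_euclidean
    {n : ℕ} (hn : 2 ≤ n) (D : Set (EuclideanSpace ℝ (Fin n)))
    (hDcomp : IsCompact D) (hDconv : Convex ℝ D) (hDint : (interior D).Nonempty)
    (R₁ R₂ : ℝ) (hR₂ : 0 < R₂) (hR₂₁ : R₂ ≤ R₁)
    (hsand : ∀ p ∈ frontier D, ∃ x₁ x₂ : EuclideanSpace ℝ (Fin n),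
      dist x₁ p = R₁ ∧ dist x₂ p = R₂ ∧
      Metric.closedBall x₂ R₂ ⊆ D ∧ D ⊆ Metric.closedBall x₁ R₁) :
    ∃ (o : EuclideanSpace ℝ (Fin n)) (r R : ℝ), 0 ≤ r ∧ r ≤ R ∧
      Metric.closedBall o r ⊆ D ∧ D ⊆ Metric.closedBall o R ∧
      R - r ≤ (Real.sqrt 2 - 1) * (R₁ - R₂) := by
  have : Nonempty (Fin n) := ⟨⟨0, by omega⟩⟩
  have : Nontrivial (EuclideanSpace ℝ (Fin n)) := inferInstance
  have hDne : D.Nonempty := hDint.mono interior_subset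
  set C : Set (EuclideanSpace ℝ (Fin n)) := {x | Metric.closedBall x R₂ ⊆ D} with hCdef
  have hCD : C ⊆ D := fun x hx => hx (Metric.mem_closedBall_self hR₂.le)
  have hCeq : C = ⋂ v ∈ Metric.closedBall (0 : EuclideanSpace ℝ (Fin n)) R₂,
      (fun x => x + v) ⁻¹' D := by
    ext x
    simp only [Set.mem_iInter, Set.mem_preimage, hCdef, Set.mem_ofPred_eq]
    constructor
    · intro h v hv
      apply h
      simpa [dist_eq_norm] using hv
    · intro h y hy
      have := h (y - x) (by simpa [dist_eq_norm] using hy)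
      simpa using this
  have hCclosed : IsClosed C := by
    rw [hCeq]
    exact isClosed_biInter fun v _ => hDcomp.isClosed.preimage (by fun_prop)
  have hCcomp : IsCompact C := hDcomp.of_isClosed_subset hCclosed hCD
  have hCconv : Convex ℝ C := by
    rw [hCeq]
    exact convex_iInter₂ fun v _ => hDconv.translate_preimage_left v
  obtain ⟨p0, hp0, -⟩ := aux_far D hDcomp hDne 0
  obtain ⟨y₁, y₂, -, -, hy₂, hy₁⟩ := hsand p0 hp0
  have hCne : C.Nonempty := ⟨y₂, hy₂⟩
  obtain ⟨o, hoC, R, hR0, hRle, hkey⟩ := aux_circ C hCcomp hCconv hCne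
  have hk : ∀ x, D ⊆ Metric.closedBall x R₁ → R ^ 2 + dist x o ^ 2 ≤ (R₁ - R₂) ^ 2 := by
    intro x hx
    obtain ⟨c, hc, h⟩ := hkey x
    have h1 := aux_ball c x R₂ R₁ hR₂ hR₂₁ (Set.Subset.trans hc hx)
    exact h.trans (pow_le_pow_left₀ dist_nonneg h1 2)
  have hRρ : R ^ 2 ≤ (R₁ - R₂) ^ 2 := by nlinarith [hk y₁ hy₁, sq_nonneg (dist y₁ o)]
  have hρ : 0 ≤ R₁ - R₂ := by linarith
  have hRρ' : R ≤ R₁ - R₂ := le_of_sq_le_sq_aux hRρ hρ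
  set s := Real.sqrt ((R₁ - R₂) ^ 2 - R ^ 2) with hs
  have hs0 : 0 ≤ s := Real.sqrt_nonneg _
  have hs2 : s ^ 2 = (R₁ - R₂) ^ 2 - R ^ 2 := Real.sq_sqrt (by linarith)
  have hsρ : s ≤ R₁ - R₂ := le_of_sq_le_sq_aux (by nlinarith) hρ
  have hrpos : 0 < R₁ - s := by linarith
  refine ⟨o, R₁ - s, R + R₂, hrpos.le, ?_, ?_, ?_, ?_⟩
  · have : R₁ - R₂ ≤ R + s := le_of_sq_le_sq_aux (by nlinarith [mul_nonneg hR0 hs0]) (by linarith)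
    linarith
  · have hdisj : ∀ p ∈ frontier D, R₁ - s ≤ dist p o := by
      intro p hp
      obtain ⟨x₁, x₂, h1, -, -, h4⟩ := hsand p hp
      have h5 := hk x₁ h4
      have h6 : dist x₁ o ≤ s := Real.le_sqrt_of_sq_le (by linarith)
      have h7 := dist_triangle x₁ o p
      rw [dist_comm o p] at h7
      linarith
    have hb : Metric.ball o (R₁ - s) ⊆ D := by
      have hpre : IsPreconnected (Metric.ball o (R₁ - s)) := (convex_ball _ _).isPreconnected
      by_contra hcon
      obtain ⟨z, hz, hzD⟩ := Set.not_subset.1 hcon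
      have hin : ∀ w ∈ Metric.ball o (R₁ - s), w ∈ D → w ∈ interior D := by
        intro w hw hwD
        by_contra hni
        exact absurd (hdisj w ⟨subset_closure hwD, hni⟩) (not_le.2 hw)
      obtain ⟨w, hw, hw1, hw2⟩ := hpre (interior D) Dᶜ isOpen_interior
        hDcomp.isClosed.isOpen_compl
        (fun w hw => (em (w ∈ D)).imp (hin w hw) id)
        ⟨o, Metric.mem_ball_self hrpos, hin o (Metric.mem_ball_self hrpos) (hCD hoC)⟩
        ⟨z, hz, hzD⟩
      exact hw2 (interior_subset hw1)
    rw [← closure_ball o hrpos.ne']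
    exact closure_minimal hb hDcomp.isClosed
  · obtain ⟨p, hp, hmax⟩ := aux_far D hDcomp hDne o
    obtain ⟨x₁, x₂, -, h2, h3, -⟩ := hsand p hp
    intro q hq
    have h5 := hRle x₂ h3
    have h6 := dist_triangle p x₂ o
    rw [dist_comm p x₂] at h6
    have := hmax q hq
    rw [Metric.mem_closedBall]
    linarith
  · have h2 : Real.sqrt 2 ^ 2 = 2 := Real.sq_sqrt (by norm_num)
    have : R + s ≤ Real.sqrt 2 * (R₁ - R₂) := by
      refine le_of_sq_le_sq_aux ?_ (by positivity)
      rw [mul_pow, h2]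
      nlinarith [sq_nonneg (R - s)]
    linarith
end

section
/- Let n ≥ 2 and let D be a compact convex body in Euclidean space ℝⁿ satisfying the R₁,R₂ ball-sandwich condition for some reals 0 < R₂ ≤ R₁. Then there exist a point o ∈ ℝⁿ and reals r, R with 0 < r ≤ R such that Metric.closedBall o r ⊆ D ⊆ Metric.closedBall o R and R / r ≤ (√(R₁/R₂) + √2) / (√(R₂/R₁) + √2). (In terms of the curvature bounds κ₁ = 1/R₁, κ₂ = 1/R₂, the right-hand side is (√(κ₂/κ₁) + √2)/(√(κ₁/κ₂) + √2).) -/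
open Metric Filter Topology in
lemma qe_ball {E : Type*} [NormedAddCommGroup E] [InnerProductSpace ℝ E] [Nontrivial E]
    {x y : E} {a b : ℝ} (ha : 0 ≤ a) (h : closedBall x a ⊆ closedBall y b) :
    dist x y ≤ b - a := by
  by_cases hxy : x = y
  · subst hxy
    obtain ⟨u, hu⟩ := exists_norm_eq E ha
    have := h (show x + u ∈ closedBall x a by simp [hu])
    simp [hu] at this
    simpa using this
  · have hd : 0 < ‖x - y‖ := norm_pos_iff.2 (sub_ne_zero.2 hxy)
    have := h (show x + (a / ‖x - y‖) • (x - y) ∈ closedBall x a by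
      simp [norm_smul, abs_of_nonneg ha, hd.ne'])
    rw [mem_closedBall, dist_eq_norm] at this
    have e : x + (a / ‖x - y‖) • (x - y) - y = (1 + a / ‖x - y‖) • (x - y) := by
      rw [add_smul, one_smul]; abel
    rw [e, norm_smul, Real.norm_of_nonneg (by positivity), add_mul, one_mul,
      div_mul_cancel₀ _ hd.ne'] at this
    rw [dist_eq_norm]; linarith

open Metric Filter Topology in
lemma qe_circum {E : Type*} [NormedAddCommGroup E] [InnerProductSpace ℝ E]
    {D : Set E} (hD : IsCompact D) (hne : D.Nonempty) {o : E} {R : ℝ}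
    (hR : D ⊆ closedBall o R) (hmin : ∀ o' R', D ⊆ closedBall o' R' → R ≤ R') (v : E) :
    ∃ p ∈ D, dist p o = R ∧ inner ℝ (p - o) v ≤ 0 := by
  have hR0 : 0 ≤ R := by
    obtain ⟨p, hp⟩ := hne
    exact dist_nonneg.trans (hR hp)
  have key : ∀ t : ℝ, 0 < t → ∃ p ∈ D, R ≤ dist p (o + t • v) ∧
      2 * inner ℝ (p - o) v ≤ t * ‖v‖ ^ 2 := by
    intro t ht
    obtain ⟨p, hp, hpm⟩ := hD.exists_isMaxOn hne
      (f := fun p => dist p (o + t • v)) (by fun_prop)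
    have h1 : R ≤ dist p (o + t • v) := hmin _ _ fun z hz => hpm hz
    refine ⟨p, hp, h1, ?_⟩
    have h2 : dist p o ≤ R := hR hp
    rw [dist_eq_norm] at h1 h2
    have e : p - (o + t • v) = (p - o) - t • v := by abel
    have h3 := norm_sub_sq_real (p - o) (t • v)
    rw [inner_smul_right, norm_smul, mul_pow, ← e, Real.norm_of_nonneg ht.le] at h3
    have h4 : R ^ 2 ≤ ‖p - (o + t • v)‖ ^ 2 := by gcongr
    have h5 : ‖p - o‖ ^ 2 ≤ R ^ 2 := by gcongr
    have : t * (2 * inner ℝ (p - o) v) ≤ t * (t * ‖v‖ ^ 2) := by nlinarith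
    exact le_of_mul_le_mul_left this ht
  choose p hpD hp1 hp2 using fun k : ℕ => key (1 / ((k : ℝ) + 1)) (by positivity)
  obtain ⟨q, hq, φ, hφ, hlim⟩ := hD.tendsto_subseq hpD
  have ht : Tendsto (fun k : ℕ => 1 / (((φ k : ℕ) : ℝ) + 1)) atTop (𝓝 0) :=
    (tendsto_one_div_add_atTop_nhds_zero_nat (𝕜 := ℝ)).comp hφ.tendsto_atTop
  refine ⟨q, hq, le_antisymm (hR hq) ?_, ?_⟩
  · have := hlim.dist ((tendsto_const_nhds (x := o)).add (ht.smul_const v))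
    rw [zero_smul, add_zero] at this
    exact ge_of_tendsto' this fun k => hp1 (φ k)
  · have a1 := ((hlim.sub_const o).inner (𝕜 := ℝ) (tendsto_const_nhds (x := v))).const_mul 2
    have a2 := ht.mul_const (‖v‖ ^ 2)
    have := le_of_tendsto_of_tendsto' a1 a2 fun k => hp2 (φ k)
    linarith

open Metric Filter Topology in
lemma qe_exists {E : Type*} [NormedAddCommGroup E] [InnerProductSpace ℝ E] [ProperSpace E]
    {D : Set E} (hne : D.Nonempty) {x₁ : E} {R₁ : ℝ} (h1 : D ⊆ closedBall x₁ R₁) :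
    ∃ (o : E) (R : ℝ), D ⊆ closedBall o R ∧ ∀ o' R', D ⊆ closedBall o' R' → R ≤ R' := by
  obtain ⟨p₀, hp₀⟩ := hne
  let S : Set (E × ℝ) := {z | (∀ p ∈ D, dist p z.1 ≤ z.2) ∧ z.2 ≤ R₁}
  have hSc : IsClosed S := by
    have : S = (⋂ p ∈ D, {z : E × ℝ | dist p z.1 ≤ z.2}) ∩ {z | z.2 ≤ R₁} := by
      ext z; simp [S]
    rw [this]
    refine IsClosed.inter (isClosed_biInter fun p _ => ?_) ?_
    · exact isClosed_le (by fun_prop) (by fun_prop)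
    · exact isClosed_le (by fun_prop) (by fun_prop)
  have hSb : S ⊆ closedBall p₀ R₁ ×ˢ Set.Icc 0 R₁ := by
    rintro ⟨a, b⟩ ⟨ha, hb⟩
    have := ha p₀ hp₀
    simp only at this hb
    refine ⟨?_, dist_nonneg.trans this, hb⟩
    rw [mem_closedBall, dist_comm]; exact this.trans hb
  have hS : IsCompact S :=
    ((isCompact_closedBall p₀ R₁).prod isCompact_Icc).of_isClosed_subset hSc hSb
  obtain ⟨⟨o, R⟩, ⟨ho, hoR⟩, hm⟩ := hS.exists_isMinOn ⟨(x₁, R₁), fun p hp => h1 hp, le_rfl⟩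
    (f := Prod.snd) continuous_snd.continuousOn
  refine ⟨o, R, fun p hp => ho p hp, fun o' R' h' => ?_⟩
  rcases le_total R' R₁ with h | h
  · exact hm (show (o', R') ∈ S from ⟨fun p hp => h' hp, h⟩)
  · exact le_trans hoR h

lemma qe_real {R₁ R₂ r R : ℝ} (hR₂ : 0 < R₂) (hR₂₁ : R₂ ≤ R₁) (hr : 0 < r)
    (h : (R - R₂) ^ 2 + (R₁ - r) ^ 2 ≤ (R₁ - R₂) ^ 2) :
    R / r ≤ (Real.sqrt (R₁ / R₂) + Real.sqrt 2) / (Real.sqrt (R₂ / R₁) + Real.sqrt 2) := by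
  have hR₁ : 0 < R₁ := hR₂.trans_le hR₂₁
  rw [Real.sqrt_div hR₁.le, Real.sqrt_div hR₂.le]
  have hx : 0 < √R₁ := Real.sqrt_pos.2 hR₁
  have hy : 0 < √R₂ := Real.sqrt_pos.2 hR₂
  have hx2 : R₁ = √R₁ ^ 2 := (Real.sq_sqrt hR₁.le).symm
  have hy2 : R₂ = √R₂ ^ 2 := (Real.sq_sqrt hR₂.le).symm
  have hc : 0 < √(2:ℝ) := by positivity
  have hc2 : √(2:ℝ) ^ 2 = 2 := Real.sq_sqrt (by norm_num)
  generalize √R₁ = x at *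
  generalize √R₂ = y at *
  generalize √(2:ℝ) = c at *
  subst hx2 hy2
  have e : (x / y + c) / (y / x + c) = (x * (x + c * y)) / (y * (y + c * x)) := by
    field_simp
  rw [e, div_le_div_iff₀ hr (by positivity)]
  set A := y * (y + c * x) with hA
  set B := x * (x + c * y) with hB
  have hS : A ^ 2 + B ^ 2 = (x ^ 2 + y ^ 2 + c * x * y) ^ 2 := by
    rw [hA, hB]; linear_combination (x ^ 2 * y ^ 2) * hc2
  have hd : 0 ≤ (x ^ 2 - y ^ 2) * (x ^ 2 + y ^ 2 + c * x * y) :=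
    mul_nonneg (by linarith) (by positivity)
  have hcs : (R - y ^ 2) * A + (x ^ 2 - r) * B ≤
      (x ^ 2 - y ^ 2) * (x ^ 2 + y ^ 2 + c * x * y) := by
    apply le_of_sq_le_sq _ hd
    rw [mul_pow, ← hS]
    have := mul_le_mul_of_nonneg_right h (show 0 ≤ A ^ 2 + B ^ 2 by positivity)
    nlinarith [sq_nonneg ((R - y ^ 2) * B - (x ^ 2 - r) * A)]
  have e2 : y ^ 2 * A - x ^ 2 * B + (x ^ 2 - y ^ 2) * (x ^ 2 + y ^ 2 + c * x * y) = 0 := by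
    rw [hA, hB]; ring
  linarith

/-- Quotient estimate for κ₁,κ₂-convex domains in Euclidean space:
the boundary fits in a spherical shell with ratio of radii at most
(√(R₁/R₂) + √2)/(√(R₂/R₁) + √2). -/
theorem quotient_estimate_euclidean
    {n : ℕ} (hn : 2 ≤ n) (D : Set (EuclideanSpace ℝ (Fin n)))
    (hDcomp : IsCompact D) (hDconv : Convex ℝ D) (hDint : (interior D).Nonempty)
    (R₁ R₂ : ℝ) (hR₂ : 0 < R₂) (hR₂₁ : R₂ ≤ R₁)
    (hsand : ∀ p ∈ frontier D, ∃ x₁ x₂ : EuclideanSpace ℝ (Fin n),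
      dist x₁ p = R₁ ∧ dist x₂ p = R₂ ∧
      Metric.closedBall x₂ R₂ ⊆ D ∧ D ⊆ Metric.closedBall x₁ R₁) :
    ∃ (o : EuclideanSpace ℝ (Fin n)) (r R : ℝ), 0 < r ∧ r ≤ R ∧
      Metric.closedBall o r ⊆ D ∧ D ⊆ Metric.closedBall o R ∧
      R / r ≤ (Real.sqrt (R₁ / R₂) + Real.sqrt 2) / (Real.sqrt (R₂ / R₁) + Real.sqrt 2) := by

  haveI : Nontrivial (EuclideanSpace ℝ (Fin n)) := by
    haveI : Nonempty (Fin n) := ⟨⟨0, by omega⟩⟩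
    infer_instance
  have hne : D.Nonempty := hDint.mono interior_subset
  obtain ⟨z, hz⟩ := id hne
  obtain ⟨p₀, hp₀, -⟩ := hDcomp.exists_mem_frontier_infDist_compl_eq_dist hz
  obtain ⟨y₁, y₂, -, -, hy₂, hy₁⟩ := hsand p₀ hp₀
  obtain ⟨o, R, hoR, hmin⟩ := qe_exists hne hy₁
  have hcirc := qe_circum hDcomp hne hoR hmin
  have hR2 : R₂ ≤ R := by
    have := qe_ball hR₂.le (hy₂.trans hoR)
    linarith [dist_nonneg (x := y₂) (y := o)]
  have hoD : o ∈ D := by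
    by_contra hcon
    obtain ⟨f, u, hfo, hfD⟩ := geometric_hahn_banach_point_closed hDconv hDcomp.isClosed hcon
    obtain ⟨p, hp, -, hpv⟩ := hcirc ((InnerProductSpace.toDual ℝ _).symm f)
    rw [real_inner_comm, InnerProductSpace.toDual_symm_apply, map_sub] at hpv
    linarith [hfD p hp]
  obtain ⟨q, hq, hqr⟩ := hDcomp.exists_mem_frontier_infDist_compl_eq_dist hoD
  have hin : Metric.closedBall o (Metric.infDist o Dᶜ) ⊆ D := by
    have := Metric.closedBall_infDist_compl_subset_closure hoD
    rwa [hDcomp.isClosed.closure_eq] at this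
  generalize Metric.infDist o Dᶜ = r at *
  obtain ⟨x₁, -, hx₁q, -, -, hx₁⟩ := hsand q hq
  have hr0 : 0 ≤ r := hqr ▸ dist_nonneg
  have hrR1 : r ≤ R₁ := by
    have := qe_ball hr0 (hin.trans hx₁)
    linarith [dist_nonneg (x := o) (y := x₁)]
  have hrR : r ≤ R := by
    have := qe_ball hr0 (hin.trans hoR)
    linarith [dist_nonneg (x := o) (y := o)]
  have hx₁o : R₁ - r ≤ ‖x₁ - o‖ := by
    rw [← dist_eq_norm]
    linarith [dist_triangle x₁ o q]
  obtain ⟨p, hp, hpo, hpv⟩ := hcirc (x₁ - o)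
  have hRpos : 0 < R := hR₂.trans_le hR2
  have hpf : p ∈ frontier D := by
    refine ⟨subset_closure hp, fun hpi => ?_⟩
    have := interior_mono hoR hpi
    rw [interior_closedBall _ hRpos.ne', Metric.mem_ball] at this
    linarith
  obtain ⟨-, x₂, -, hx₂p, hx₂, -⟩ := hsand p hpf
  have hA := qe_ball hR₂.le (hx₂.trans hoR)
  have hB := qe_ball hR₂.le (hx₂.trans hx₁)
  have hA' : ‖x₂ - o‖ = R - R₂ := by
    rw [← dist_eq_norm]
    have := dist_triangle p x₂ o
    rw [dist_comm p x₂] at this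
    linarith
  have hcol : R • (x₂ - o) = (R - R₂) • (p - o) := by
    rw [← sub_eq_zero, ← norm_eq_zero, ← sq_eq_zero_iff]
    have h1 := norm_sub_sq_real (x₂ - o) (p - o)
    rw [sub_sub_sub_cancel_right, ← dist_eq_norm, ← dist_eq_norm p o, hx₂p, hpo, hA'] at h1
    rw [norm_sub_sq_real, norm_smul, norm_smul, inner_smul_left, inner_smul_right,
      hA', ← dist_eq_norm p o, hpo, Real.norm_of_nonneg hRpos.le,
      Real.norm_of_nonneg (sub_nonneg.2 hR2)]
    simp only [conj_trivial]
    linear_combination (-(R * (R - R₂))) * h1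
  have hinner : inner ℝ (x₂ - o) (x₁ - o) ≤ 0 := by
    have h1 : R * inner ℝ (x₂ - o) (x₁ - o) = (R - R₂) * inner ℝ (p - o) (x₁ - o) := by
      rw [← real_inner_smul_left, hcol, real_inner_smul_left]
    have h2 : R * inner ℝ (x₂ - o) (x₁ - o) ≤ 0 := by
      rw [h1]; exact mul_nonpos_of_nonneg_of_nonpos (sub_nonneg.2 hR2) hpv
    exact nonpos_of_mul_nonpos_right h2 hRpos
  have hmain : (R - R₂) ^ 2 + (R₁ - r) ^ 2 ≤ (R₁ - R₂) ^ 2 := by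
    have h1 := norm_sub_sq_real (x₂ - o) (x₁ - o)
    rw [sub_sub_sub_cancel_right, hA'] at h1
    rw [dist_eq_norm] at hB
    have h2 : ‖x₂ - x₁‖ ^ 2 ≤ (R₁ - R₂) ^ 2 := by gcongr
    have h3 : (R₁ - r) ^ 2 ≤ ‖x₁ - o‖ ^ 2 :=
      pow_le_pow_left₀ (sub_nonneg.2 hrR1) hx₁o 2
    linarith
  have hr : 0 < r := by
    rcases hr0.lt_or_eq with h | h
    · exact h
    · subst h
      nlinarith [sq_nonneg (R - R₂)]
  exact ⟨o, r, R, hr, hrR, hin, hoR, qe_real hR₂ hR₂₁ hr hmain⟩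
end

section
/- Let n ≥ 2 and let D be a compact convex body in Euclidean space ℝⁿ satisfying the R₁,R₂ ball-sandwich condition for some reals 0 < R₂ ≤ R₁. Then there exist a point o ∈ ℝⁿ and reals r, R with 0 < r ≤ R such that Metric.closedBall o r ⊆ D ⊆ Metric.closedBall o R and R / r ≤ R₁ / R₂ (equivalently, R/r ≤ κ₂/κ₁ where κᵢ = 1/Rᵢ). -/
open Filter Topology in
lemma contact_aux {E : Type*} [NormedAddCommGroup E] [InnerProductSpace ℝ E] (D : Set E)
    (hD : IsCompact D) (o : E) (R : ℝ) (hR : 0 ≤ R) (hsub : D ⊆ Metric.closedBall o R)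
    (hmin : ∀ o' R', D ⊆ Metric.closedBall o' R' → R ≤ R') (v : E) :
    ∃ p ∈ D, dist p o = R ∧ 0 ≤ inner ℝ (p - o) v := by
  have key : ∀ k : ℕ, ∃ q ∈ D, R - (1 / ((k : ℝ) + 1)) ^ 2 - (1 / ((k : ℝ) + 1)) * ‖v‖ ≤ ‖q - o‖ ∧
      0 ≤ 2 * inner ℝ (q - o) v + (1 / ((k : ℝ) + 1)) * (‖v‖ ^ 2 + 2 * R) := by
    intro k
    have he : 0 < 1 / ((k : ℝ) + 1) := by positivity
    set e := 1 / ((k : ℝ) + 1) with hedef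
    clear_value e
    have hn : ¬ D ⊆ Metric.closedBall (o - e • v) (R - e ^ 2) := by
      intro h
      have := hmin _ _ h
      nlinarith
    obtain ⟨q, hq, hq2⟩ := Set.not_subset.1 hn
    have hqo := hsub hq
    rw [Metric.mem_closedBall, dist_eq_norm] at hq2 hqo
    push Not at hq2
    have e1 : q - (o - e • v) = (q - o) + e • v := by abel
    rw [e1] at hq2
    refine ⟨q, hq, ?_, ?_⟩
    · have := norm_add_le (q - o) (e • v)
      rw [norm_smul, Real.norm_of_nonneg he.le] at this
      linarith
    · have h1 : R ^ 2 - 2 * R * e ^ 2 ≤ ‖(q - o) + e • v‖ ^ 2 := by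
        rcases le_total 0 (R - e ^ 2) with h | h
        · nlinarith [norm_nonneg ((q - o) + e • v), sq_nonneg (e ^ 2)]
        · nlinarith [sq_nonneg (‖(q - o) + e • v‖), sq_nonneg e]
      rw [norm_add_sq_real, inner_smul_right, norm_smul, Real.norm_of_nonneg he.le] at h1
      have h2 : ‖q - o‖ ^ 2 ≤ R ^ 2 := by gcongr
      have h3 : 0 ≤ e * (2 * inner ℝ (q - o) v + e * (‖v‖ ^ 2 + 2 * R)) := by nlinarith
      exact nonneg_of_mul_nonneg_right h3 he
  choose q hqD hq1 hq2 using key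
  obtain ⟨p, hp, φ, hφ, hlim⟩ := hD.tendsto_subseq hqD
  have he : Tendsto (fun k => 1 / (((φ k : ℕ) : ℝ) + 1)) atTop (𝓝 0) :=
    tendsto_one_div_add_atTop_nhds_zero_nat.comp hφ.tendsto_atTop
  have hlim' : Tendsto (fun k => q (φ k) - o) atTop (𝓝 (p - o)) := hlim.sub_const o
  refine ⟨p, hp, le_antisymm (hsub hp) ?_, ?_⟩
  · rw [dist_eq_norm]
    refine le_of_tendsto_of_tendsto' (?_ : Tendsto _ _ (𝓝 R)) hlim'.norm (fun k => hq1 (φ k))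
    simpa using ((he.pow 2).const_sub R).sub (he.mul_const ‖v‖)
  · have h : Tendsto (fun k => 2 * inner ℝ (q (φ k) - o) v
        + (1 / (((φ k : ℕ) : ℝ) + 1)) * (‖v‖ ^ 2 + 2 * R)) atTop
        (𝓝 (2 * inner ℝ (p - o) v + 0 * (‖v‖ ^ 2 + 2 * R))) :=
      ((hlim'.inner tendsto_const_nhds).const_mul 2).add (he.mul_const _)
    have := ge_of_tendsto' h (fun k => hq2 (φ k))
    linarith

lemma circum_aux {E : Type*} [NormedAddCommGroup E] [ProperSpace E] (D : Set E)
    (hD : IsCompact D) (hne : D.Nonempty) :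
    ∃ (o : E) (R : ℝ), 0 ≤ R ∧ D ⊆ Metric.closedBall o R ∧
      ∀ o' R', D ⊆ Metric.closedBall o' R' → R ≤ R' := by
  obtain ⟨q, hq⟩ := hne
  obtain ⟨R0, hR0⟩ := hD.isBounded.subset_closedBall q
  have h0 : 0 ≤ R0 := by simpa using hR0 hq
  set S : Set (E × ℝ) := {x | ∀ d ∈ D, dist d x.1 ≤ x.2} with hS
  have hSc : IsClosed S := by
    have : S = ⋂ d ∈ D, {x : E × ℝ | dist d x.1 ≤ x.2} := by ext; simp [hS]
    rw [this]
    exact isClosed_biInter fun d _ => isClosed_le (by fun_prop) (by fun_prop)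
  have hK : IsCompact ((Metric.closedBall q R0 ×ˢ Set.Icc 0 R0) ∩ S) :=
    ((isCompact_closedBall q R0).prod isCompact_Icc).inter_right hSc
  obtain ⟨x, ⟨⟨hx1, hx2⟩, hx3⟩, hx⟩ := hK.exists_isMinOn
    ⟨(q, R0), ⟨⟨by simpa using h0, by simpa using h0⟩, fun d hd => hR0 hd⟩⟩
    continuous_snd.continuousOn
  refine ⟨x.1, x.2, hx2.1, fun d hd => hx3 d hd, fun o' R' h => ?_⟩
  rcases le_total R' R0 with h' | h'
  · have hq' : dist q o' ≤ R' := h hq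
    exact hx (show (o', R') ∈ _ from ⟨⟨by
      rw [Metric.mem_closedBall, dist_comm]; exact hq'.trans h',
      dist_nonneg.trans hq', h'⟩, fun d hd => h hd⟩)
  · exact hx2.2.trans h'

lemma wbtw_aux {E : Type*} [NormedAddCommGroup E] [InnerProductSpace ℝ E] (o p x : E) (r R : ℝ)
    (hr : 0 < r) (hp : dist p o = R) (hx : dist x p = r)
    (hsub : Metric.closedBall x r ⊆ Metric.closedBall o R) : Wbtw ℝ o x p := by
  by_cases h : x = o
  · subst h; exact wbtw_self_left ℝ _ _
  have hpos : 0 < ‖x - o‖ := norm_pos_iff.2 (sub_ne_zero.2 h)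
  have h1 : x + (r / ‖x - o‖) • (x - o) ∈ Metric.closedBall o R := by
    apply hsub
    rw [Metric.mem_closedBall, dist_eq_norm, add_sub_cancel_left, norm_smul, Real.norm_of_nonneg
      (by positivity)]
    field_simp
    rfl
  rw [Metric.mem_closedBall, dist_eq_norm] at h1
  have e1 : x + (r / ‖x - o‖) • (x - o) - o = (1 + r / ‖x - o‖) • (x - o) := by
    rw [add_smul, one_smul]; abel
  rw [e1, norm_smul, Real.norm_of_nonneg (by positivity)] at h1
  have e2 : (1 + r / ‖x - o‖) * ‖x - o‖ = ‖x - o‖ + r := by field_simp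
  rw [e2, ← dist_eq_norm] at h1
  rw [← dist_add_dist_eq_iff]
  refine le_antisymm ?_ (dist_triangle _ _ _)
  rw [dist_comm o x, dist_comm o p]
  linarith

/-- Corollary of the quotient estimate: the boundary of a κ₁,κ₂-convex Euclidean domain
fits in a spherical shell with ratio of radii at most R₁/R₂ = κ₂/κ₁. -/
theorem quotient_estimate_euclidean_weak
    {n : ℕ} (hn : 2 ≤ n) (D : Set (EuclideanSpace ℝ (Fin n)))
    (hDcomp : IsCompact D) (hDconv : Convex ℝ D) (hDint : (interior D).Nonempty)
    (R₁ R₂ : ℝ) (hR₂ : 0 < R₂) (hR₂₁ : R₂ ≤ R₁)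
    (hsand : ∀ p ∈ frontier D, ∃ x₁ x₂ : EuclideanSpace ℝ (Fin n),
      dist x₁ p = R₁ ∧ dist x₂ p = R₂ ∧
      Metric.closedBall x₂ R₂ ⊆ D ∧ D ⊆ Metric.closedBall x₁ R₁) :
    ∃ (o : EuclideanSpace ℝ (Fin n)) (r R : ℝ), 0 < r ∧ r ≤ R ∧
      Metric.closedBall o r ⊆ D ∧ D ⊆ Metric.closedBall o R ∧
      R / r ≤ R₁ / R₂ := by
  haveI : Nonempty (Fin n) := ⟨⟨0, by omega⟩⟩
  have hne : D.Nonempty := hDint.mono interior_subset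
  obtain ⟨o, R, hR, hsub, hmin⟩ := circum_aux D hDcomp hne
  have hfr : ∀ p ∈ D, dist p o = R → p ∈ frontier D := by
    intro p hp hpo
    rw [frontier, hDcomp.isClosed.closure_eq]
    refine ⟨hp, fun hi => ?_⟩
    have := interior_mono hsub hi
    rw [interior_closedBall', Metric.mem_ball] at this
    linarith
  refine ⟨o, R₂, R₁, hR₂, hR₂₁, ?_, ?_, le_rfl⟩
  · intro y hy
    by_contra hyD
    obtain ⟨f, u, hf1, hf2⟩ := geometric_hahn_banach_closed_point hDconv hDcomp.isClosed hyD
    set v := (InnerProductSpace.toDual ℝ (EuclideanSpace ℝ (Fin n))).symm f with hv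
    have hfv : ∀ w, inner ℝ w v = f w := fun w => by
      rw [real_inner_comm, hv, InnerProductSpace.toDual_symm_apply]
    obtain ⟨p, hp, hpo, hpv⟩ := contact_aux D hDcomp o R hR hsub hmin v
    obtain ⟨x₁, x₂, -, h2, h3, -⟩ := hsand p (hfr p hp hpo)
    obtain ⟨t, ht, rfl⟩ := wbtw_aux o p x₂ R₂ R hR₂ hpo h2 (h3.trans hsub)
    have hz : AffineMap.lineMap o p t + (y - o) ∈ D := by
      apply h3
      rw [Metric.mem_closedBall, dist_eq_norm] at hy ⊢
      rwa [add_sub_cancel_left]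
    have h4 := hf1 _ hz
    rw [hfv] at hpv
    rw [AffineMap.lineMap_apply, vsub_eq_sub, vadd_eq_add] at h4
    simp only [map_add, map_sub, map_smul, smul_eq_mul] at h4 hpv
    nlinarith [mul_nonneg ht.1 hpv]
  · obtain ⟨p, hp, hpo, -⟩ := contact_aux D hDcomp o R hR hsub hmin 0
    obtain ⟨x₁, x₂, -, -, -, h4⟩ := hsand p (hfr p hp hpo)
    exact hsub.trans (Metric.closedBall_subset_closedBall (hmin _ _ h4))
end

section
/- Let n ≥ 2, let κ > 0 and ε > 0, and let D be a compact convex body in Euclidean space ℝⁿ satisfying the R₁,R₂ ball-sandwich condition with R₁ = 1/κ and R₂ = 1/((1+ε)·κ) (i.e. D is a κ,(1+ε)κ-convex domain). Then there exist a point o ∈ ℝⁿ and reals r, R with 0 ≤ r ≤ R such that Metric.closedBall o r ⊆ D ⊆ Metric.closedBall o R and R − r < (√2 − 1)·ε/κ. -/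
open Metric Filter Topology in
theorem aux_ball_s5 {n : ℕ} (hn : 2 ≤ n) (x y : EuclideanSpace ℝ (Fin n)) (s t : ℝ) (hs : 0 ≤ s)
    (h : closedBall x s ⊆ closedBall y t) : dist x y + s ≤ t := by
  haveI : Nonempty (Fin n) := ⟨⟨0, by omega⟩⟩
  have key : ∃ u : EuclideanSpace ℝ (Fin n), ‖u‖ = 1 ∧ x - y = ‖x - y‖ • u := by
    by_cases hxy : x - y = 0
    · obtain ⟨u, hu⟩ := exists_norm_eq (EuclideanSpace ℝ (Fin n)) (zero_le_one (α := ℝ))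
      exact ⟨u, hu, by simp [hxy]⟩
    · have h0 : ‖x - y‖ ≠ 0 := norm_ne_zero_iff.2 hxy
      refine ⟨‖x - y‖⁻¹ • (x - y), ?_, ?_⟩
      · rw [norm_smul, norm_inv, norm_norm, inv_mul_cancel₀ h0]
      · rw [smul_smul, mul_inv_cancel₀ h0, one_smul]
  obtain ⟨u, hu, hxu⟩ := key
  have h1 : x + s • u ∈ closedBall x s := by
    simp [norm_smul, hu, abs_of_nonneg hs]
  have h2 := h h1
  rw [mem_closedBall, dist_eq_norm] at h2
  have h3 : x + s • u - y = (‖x - y‖ + s) • u := by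
    rw [add_smul, ← hxu]; abel
  rw [h3, norm_smul, hu, mul_one, Real.norm_of_nonneg (by positivity)] at h2
  rwa [dist_eq_norm]

open Metric Filter Topology in
theorem aux_contact {n : ℕ} (D : Set (EuclideanSpace ℝ (Fin n))) (hne : (Dᶜ).Nonempty)
    (o v : EuclideanSpace ℝ (Fin n)) (r : ℝ)
    (hr : infDist o Dᶜ = r) (hmax : ∀ x, infDist x Dᶜ ≤ r) :
    ∃ p ∈ closure Dᶜ, dist p o = r ∧ 0 ≤ inner ℝ v (p - o) := by
  have hcl : IsClosed (closure Dᶜ) := isClosed_closure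
  have hge : ∀ q ∈ closure Dᶜ, r ≤ ‖q - o‖ := by
    intro q hq
    rw [← hr, ← infDist_closure, ← dist_eq_norm, dist_comm]
    exact infDist_le_dist_of_mem hq
  have hex : ∀ k : ℕ, ∃ q ∈ closure Dᶜ, ‖q - (o + (1 / ((k : ℝ) + 1)) • v)‖ ≤ r := by
    intro k
    obtain ⟨q, hq, hd⟩ := hcl.exists_infDist_eq_dist hne.closure (o + (1 / ((k : ℝ) + 1)) • v)
    refine ⟨q, hq, ?_⟩
    rw [← dist_eq_norm, dist_comm, ← hd, infDist_closure]
    exact hmax _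
  choose q hq hqr using hex
  have hin : ∀ k, 0 ≤ inner ℝ v (q k - o) := by
    intro k
    set t : ℝ := 1 / ((k : ℝ) + 1) with ht
    have htp : 0 < t := by positivity
    have h1 := hge (q k) (hq k)
    have h2 := hqr k
    have h3 : q k - (o + t • v) = (q k - o) - t • v := by abel
    rw [h3] at h2
    have h4 := norm_sub_sq_real (q k - o) (t • v)
    rw [inner_smul_right, real_inner_comm] at h4
    have h0 : 0 ≤ r := hr ▸ infDist_nonneg
    have h5 : 0 ≤ t * inner ℝ v (q k - o) := by
      have := norm_nonneg ((q k - o) - t • v)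
      nlinarith [sq_nonneg ‖t • v‖]
    exact nonneg_of_mul_nonneg_right h5 htp
  have hbd : ∀ k, q k ∈ closedBall o (r + ‖v‖) := by
    intro k
    rw [mem_closedBall, dist_eq_norm]
    set t : ℝ := 1 / ((k : ℝ) + 1) with ht
    have htp : 0 < t := by positivity
    have ht1 : t ≤ 1 := by
      rw [ht, div_le_one (by positivity)]; linarith [(Nat.cast_nonneg k : (0:ℝ) ≤ k)]
    have h3 : q k - o = (q k - (o + t • v)) + t • v := by abel
    rw [h3]
    refine (norm_add_le _ _).trans (add_le_add (hqr k) ?_)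
    rw [norm_smul, Real.norm_of_nonneg htp.le]
    nlinarith [norm_nonneg v]
  obtain ⟨p, -, φ, hφ, hlim⟩ := (isCompact_closedBall o (r + ‖v‖)).tendsto_subseq hbd
  have hp : p ∈ closure Dᶜ := hcl.mem_of_tendsto hlim (Eventually.of_forall fun k => hq _)
  refine ⟨p, hp, ?_, ?_⟩
  · apply le_antisymm
    · have ht : Tendsto (fun k => ‖q (φ k) - (o + (1 / ((φ k : ℝ) + 1)) • v)‖) atTop
          (𝓝 ‖p - (o + (0:ℝ) • v)‖) := by
        refine (hlim.sub (tendsto_const_nhds.add (Tendsto.smul_const ?_ v))).norm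
        exact (tendsto_one_div_add_atTop_nhds_zero_nat (𝕜 := ℝ)).comp hφ.tendsto_atTop
      have := le_of_tendsto' ht (fun k => hqr (φ k))
      simpa [dist_eq_norm] using this
    · rw [dist_eq_norm]; exact hge p hp
  · have ht : Tendsto (fun k => inner ℝ v (q (φ k) - o)) atTop (𝓝 (inner ℝ v (p - o))) :=
      tendsto_const_nhds.inner (hlim.sub tendsto_const_nhds)
    exact ge_of_tendsto' ht (fun k => hin _)

open Metric Filter Topology in
theorem aux_main {n : ℕ} (hn : 2 ≤ n) (A B : ℝ) (hB : 0 < B) (hAB : B < A)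
    (D : Set (EuclideanSpace ℝ (Fin n)))
    (hDcomp : IsCompact D) (hDint : (interior D).Nonempty)
    (hsand : ∀ p ∈ frontier D, ∃ x₁ x₂ : EuclideanSpace ℝ (Fin n),
      dist x₁ p = A ∧ dist x₂ p = B ∧ closedBall x₂ B ⊆ D ∧ D ⊆ closedBall x₁ A) :
    ∃ (o : EuclideanSpace ℝ (Fin n)) (r R : ℝ), 0 ≤ r ∧ r ≤ R ∧
      closedBall o r ⊆ D ∧ D ⊆ closedBall o R ∧
      R - r ≤ (Real.sqrt 2 - 1) * (A - B) := by
  haveI : Nonempty (Fin n) := ⟨⟨0, by omega⟩⟩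
  have hDne : D.Nonempty := hDint.mono interior_subset
  have hDu : D ≠ Set.univ := hDcomp.ne_univ
  have hne : (Dᶜ).Nonempty := Set.nonempty_compl.2 hDu
  have hDcl := hDcomp.isClosed
  obtain ⟨o, hoD, ho⟩ := hDcomp.exists_isMaxOn hDne (continuous_infDist_pt Dᶜ).continuousOn
  obtain ⟨r, hr⟩ : ∃ r, infDist o Dᶜ = r := ⟨_, rfl⟩
  have hr0 : 0 ≤ r := hr ▸ infDist_nonneg
  have hmax : ∀ x, infDist x Dᶜ ≤ r := by
    intro x
    by_cases hx : x ∈ D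
    · exact hr ▸ ho hx
    · rw [infDist_zero_of_mem (show x ∈ Dᶜ from hx)]; exact hr0
  have hrB : B ≤ r := by
    obtain ⟨p, hp⟩ : (frontier D).Nonempty := nonempty_frontier_iff.2 ⟨hDne, hDu⟩
    obtain ⟨x₁, x₂, h1, h2, h3, h4⟩ := hsand p hp
    refine le_trans ?_ (hmax x₂)
    refine (le_infDist hne).2 fun y hy => ?_
    by_contra hlt
    exact hy (h3 (by rw [mem_closedBall, dist_comm]; linarith))
  have hrp : 0 < r := hB.trans_le hrB
  have hball : closedBall o r ⊆ D := by
    rw [← closure_ball o hrp.ne']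
    refine closure_minimal (fun y hy => ?_) hDcl
    by_contra hyD
    have := infDist_le_dist_of_mem (x := o) (show y ∈ Dᶜ from hyD)
    rw [hr, dist_comm] at this
    exact absurd (mem_ball.1 hy) (not_lt.2 this)
  -- main estimate
  have hest : ∀ x₂, closedBall x₂ B ⊆ D → ‖x₂ - o‖ ^ 2 ≤ (A - B) ^ 2 - (A - r) ^ 2 := by
    intro x₂ hx₂
    obtain ⟨p, hpc, hpr, hpi⟩ := aux_contact D hne o (x₂ - o) r hr hmax
    have hpD : p ∈ D := hball (by rw [mem_closedBall, hpr])
    have hpf : p ∈ frontier D := by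
      rw [frontier_eq_closure_inter_closure]
      exact ⟨subset_closure hpD, hpc⟩
    obtain ⟨x₁, -, h1, -, -, h4⟩ := hsand p hpf
    have hA := aux_ball_s5 hn o x₁ r A hr0 (hball.trans h4)
    have hC := aux_ball_s5 hn x₂ x₁ B A hB.le (hx₂.trans h4)
    obtain ⟨a, ha⟩ : ∃ a, a = p - o := ⟨_, rfl⟩
    obtain ⟨b, hb⟩ : ∃ b, b = o - x₁ := ⟨_, rfl⟩
    obtain ⟨v, hv⟩ : ∃ v, v = x₂ - o := ⟨_, rfl⟩
    rw [dist_eq_norm, ← ha] at hpr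
    rw [dist_eq_norm, ← hb] at hA
    rw [dist_comm, dist_eq_norm, show p - x₁ = a + b by rw [ha, hb]; abel] at h1
    rw [dist_eq_norm, show x₂ - x₁ = v + b by rw [hv, hb]; abel] at hC
    rw [← ha, ← hv] at hpi
    rw [← hv]
    have hbA : ‖b‖ = A - r := by
      have := norm_add_le a b
      linarith
    have e1 := norm_add_sq_real a b
    have hz : r • b = (A - r) • a := by
      rw [← sub_eq_zero, ← norm_eq_zero, ← sq_eq_zero_iff, norm_sub_sq_real]
      rw [inner_smul_left, inner_smul_right, norm_smul, norm_smul, real_inner_comm, mul_pow,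
        mul_pow, Real.norm_eq_abs, Real.norm_eq_abs, sq_abs, sq_abs, hbA, hpr]
      rw [h1, hbA, hpr] at e1
      simp only [conj_trivial]
      linear_combination r * (A - r) * e1
    have hvb : 0 ≤ inner ℝ v b := by
      have h5 : r * inner ℝ v b = (A - r) * inner ℝ v a := by
        rw [← inner_smul_right, hz, inner_smul_right]
      have h6 : 0 ≤ A - r := hbA ▸ norm_nonneg b
      have h7 : 0 ≤ r * inner ℝ v b := h5 ▸ mul_nonneg h6 hpi
      exact nonneg_of_mul_nonneg_right h7 hrp
    have e2 := norm_add_sq_real v b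
    rw [hbA] at e2
    have := norm_nonneg (v + b)
    nlinarith
  set S := Real.sqrt ((A - B) ^ 2 - (A - r) ^ 2) with hS
  have hsub : D ⊆ closedBall o (B + S) := by
    obtain ⟨y, hyD, hy⟩ := hDcomp.exists_isMaxOn hDne
      (continuous_id.dist (continuous_const (y := o))).continuousOn
    have hDρ : D ⊆ closedBall o (dist y o) := fun z hz => mem_closedBall.2 (hy hz)
    refine hDρ.trans (closedBall_subset_closedBall ?_)
    have hyf : y ∈ frontier D := by
      rw [hDcl.frontier_eq]
      refine ⟨hyD, fun hyi => ?_⟩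
      obtain ⟨δ, hδ, hδD⟩ := nhds_basis_closedBall.mem_iff.1 (mem_interior_iff_mem_nhds.1 hyi)
      have := aux_ball_s5 hn y o δ _ hδ.le (hδD.trans hDρ)
      linarith
    obtain ⟨-, x₂, -, h2, h3, -⟩ := hsand y hyf
    have h5 : ‖x₂ - o‖ ≤ S := Real.le_sqrt_of_sq_le (hest x₂ h3)
    have := dist_triangle y x₂ o
    rw [dist_comm y x₂, h2, dist_eq_norm x₂ o] at this
    linarith
  refine ⟨o, r, B + S, hr0, ?_, hball, hsub, ?_⟩
  · have := aux_ball_s5 hn o o r _ hr0 (hball.trans hsub)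
    simpa using this
  · have hpos : 0 ≤ (A - B) ^ 2 - (A - r) ^ 2 := by
      obtain ⟨p, hp⟩ : (frontier D).Nonempty := nonempty_frontier_iff.2 ⟨hDne, hDu⟩
      obtain ⟨x₁, x₂, h1, h2, h3, h4⟩ := hsand p hp
      exact (sq_nonneg _).trans (hest x₂ h3)
    have hS2 : S ^ 2 = (A - B) ^ 2 - (A - r) ^ 2 := Real.sq_sqrt hpos
    have h2 : Real.sqrt 2 ^ 2 = 2 := Real.sq_sqrt (by norm_num)
    have h6 : S + (A - r) ≤ Real.sqrt 2 * (A - B) := by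
      refine abs_le_of_sq_le_sq' ?_ (mul_nonneg (Real.sqrt_nonneg 2) (by linarith)) |>.2
      rw [mul_pow, h2]
      nlinarith [sq_nonneg (S - (A - r))]
    linarith

/-- Stability of almost umbilical hypersurfaces in Euclidean space (width form):
a κ,(1+ε)κ-convex domain fits in a spherical shell of width less than (√2 − 1)·ε/κ. -/
theorem stability_width_euclidean
    {n : ℕ} (hn : 2 ≤ n) (κ ε : ℝ) (hκ : 0 < κ) (hε : 0 < ε)
    (D : Set (EuclideanSpace ℝ (Fin n)))
    (hDcomp : IsCompact D) (hDconv : Convex ℝ D) (hDint : (interior D).Nonempty)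
    (hsand : ∀ p ∈ frontier D, ∃ x₁ x₂ : EuclideanSpace ℝ (Fin n),
      dist x₁ p = 1 / κ ∧ dist x₂ p = 1 / ((1 + ε) * κ) ∧
      Metric.closedBall x₂ (1 / ((1 + ε) * κ)) ⊆ D ∧ D ⊆ Metric.closedBall x₁ (1 / κ)) :
    ∃ (o : EuclideanSpace ℝ (Fin n)) (r R : ℝ), 0 ≤ r ∧ r ≤ R ∧
      Metric.closedBall o r ⊆ D ∧ D ⊆ Metric.closedBall o R ∧
      R - r < (Real.sqrt 2 - 1) * ε / κ := by
  have hAB : 1 / ((1 + ε) * κ) < 1 / κ := by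
    apply one_div_lt_one_div_of_lt hκ
    nlinarith
  obtain ⟨o, r, R, h1, h2, h3, h4, h5⟩ :=
    aux_main hn (1 / κ) (1 / ((1 + ε) * κ)) (by positivity) hAB D hDcomp hDint hsand
  refine ⟨o, r, R, h1, h2, h3, h4, h5.trans_lt ?_⟩
  rw [mul_div_assoc]
  have hs : 1 < Real.sqrt 2 := by
    rw [Real.lt_sqrt (by norm_num)]; norm_num
  apply mul_lt_mul_of_pos_left _ (by linarith)
  have : 1 / κ - 1 / ((1 + ε) * κ) = (ε / κ) / (1 + ε) := by
    field_simp
    ring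
  rw [this]
  exact div_lt_self (by positivity) (by linarith)
end

section
/- Let n ≥ 2, let κ > 0 and ε > 0, and let D be a compact convex body in Euclidean space ℝⁿ satisfying the R₁,R₂ ball-sandwich condition with R₁ = 1/κ and R₂ = 1/((1+ε)·κ) (i.e. D is a κ,(1+ε)κ-convex domain). Then there exist a point o ∈ ℝⁿ and reals r, R with 0 < r ≤ R such that Metric.closedBall o r ⊆ D ⊆ Metric.closedBall o R and R/r − 1 < (√2 − 1)·ε. -/
theorem preconn_frontier {E : Type*} [TopologicalSpace E] {t u : Set E} (hu : IsClosed u)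
    (ht : IsPreconnected t) (h1 : (t ∩ u).Nonempty) (h2 : (t ∩ uᶜ).Nonempty) :
    (t ∩ frontier u).Nonempty := by
  by_contra hcon
  have hno : ∀ p ∈ t, p ∉ frontier u := fun p hp hf => hcon ⟨p, hp, hf⟩
  have hint : ∀ p ∈ t, p ∈ u → p ∈ interior u := by
    intro p hp hpu
    by_contra hi
    exact hno p hp (by rw [hu.frontier_eq]; exact ⟨hpu, hi⟩)
  obtain ⟨p, hp, hpu⟩ := h1
  obtain ⟨q, -, hq1, hq2⟩ := ht (interior u) uᶜ isOpen_interior hu.isOpen_compl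
    (fun p hp => by
      by_cases h : p ∈ u
      · exact Or.inl (hint p hp h)
      · exact Or.inr h) ⟨p, hp, hint p hp hpu⟩ h2
  exact hq2 (interior_subset hq1)

/-- A nonempty bounded set has a smallest enclosing ball. -/
theorem exists_min_ball {E : Type*} [NormedAddCommGroup E] [ProperSpace E]
    (K : Set E) (k : E) (hk : k ∈ K) (x : E) (d : ℝ)
    (hx : ∀ y ∈ K, dist y x ≤ d) :
    ∃ (o : E) (ρ : ℝ), 0 ≤ ρ ∧ ρ ≤ d ∧ (∀ y ∈ K, dist y o ≤ ρ) ∧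
      ∀ (o' : E) (ρ' : ℝ), (∀ y ∈ K, dist y o' ≤ ρ') → ρ ≤ ρ' := by
  have hd : 0 ≤ d := dist_nonneg.trans (hx k hk)
  let S : Set (E × ℝ) := (Metric.closedBall k d ×ˢ Set.Icc 0 d) ∩
    ⋂ y ∈ K, {z : E × ℝ | dist y z.1 ≤ z.2}
  have hS : IsCompact S := by
    apply ((isCompact_closedBall k d).prod isCompact_Icc).inter_right
    refine isClosed_biInter fun y _ => ?_
    exact isClosed_le (by fun_prop) (by fun_prop)
  have hmem : (x, d) ∈ S := by
    refine ⟨⟨?_, ?_⟩, ?_⟩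
    · simpa [dist_comm] using hx k hk
    · exact ⟨hd, le_rfl⟩
    · simpa using hx
  obtain ⟨z, hz, hmin⟩ := hS.exists_isMinOn ⟨_, hmem⟩ (f := Prod.snd) continuous_snd.continuousOn
  have hz2 := hz.2
  simp only [Set.mem_iInter, Set.mem_setOf_eq] at hz2
  refine ⟨z.1, z.2, hz.1.2.1, hz.1.2.2, hz2, ?_⟩
  intro o' ρ' h
  by_cases hρ : ρ' ≤ d
  · have h0 := h k hk
    have : (o', ρ') ∈ S := by
      refine ⟨⟨?_, ?_⟩, ?_⟩
      · simp only [Metric.mem_closedBall]; rw [dist_comm]; linarith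
      · exact ⟨dist_nonneg.trans h0, hρ⟩
      · simpa using h
    exact hmin this
  · exact hz.1.2.2.trans (not_le.1 hρ).le

theorem ball_in_ball {E : Type*} [NormedAddCommGroup E] [NormedSpace ℝ E]
    (x y : E) (a b : ℝ) (hb : 0 ≤ b) (hab : b ≤ a)
    (h : Metric.closedBall y b ⊆ Metric.closedBall x a) : dist y x ≤ a - b := by
  by_cases hxy : y = x
  · subst hxy; simpa using hab
  have hp : 0 < ‖y - x‖ := norm_pos_iff.2 (sub_ne_zero.2 hxy)
  have h1 : y + (b / ‖y - x‖) • (y - x) ∈ Metric.closedBall y b := by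
    simp only [Metric.mem_closedBall, dist_eq_norm, add_sub_cancel_left, norm_smul, norm_div,
      Real.norm_eq_abs, abs_of_nonneg hb, abs_of_pos hp]
    rw [div_mul_cancel₀ _ hp.ne']
  have h2 := h h1
  have e : y + (b / ‖y - x‖) • (y - x) - x = (1 + b / ‖y - x‖) • (y - x) := by module
  rw [Metric.mem_closedBall, dist_eq_norm, e, norm_smul, Real.norm_eq_abs,
    abs_of_nonneg (by positivity), add_mul, div_mul_cancel₀ _ hp.ne'] at h2
  rw [dist_eq_norm]; linarith

theorem final_ineq (b δ ρ s ε : ℝ) (hb : 0 < b) (hε : 0 < ε) (hδ : δ = ε * b)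
    (hρ : 0 ≤ ρ) (hs : 0 ≤ s) (h : s ^ 2 = δ ^ 2 - ρ ^ 2) :
    b + (δ - s) ≤ b + ρ ∧ 0 < b + (δ - s) ∧
      (b + ρ) / (b + (δ - s)) - 1 < (Real.sqrt 2 - 1) * ε := by
  have hδ0 : 0 < δ := by rw [hδ]; positivity
  have hsd : s ≤ δ := by nlinarith
  have h1 : δ ≤ ρ + s := by
    apply le_of_sq_le_sq _ (by positivity)
    nlinarith [mul_nonneg hρ hs]
  have h2 : ρ + s ≤ Real.sqrt 2 * δ := by
    apply le_of_sq_le_sq _ (by positivity)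
    rw [mul_pow, Real.sq_sqrt (by norm_num)]
    nlinarith [sq_nonneg (ρ - s)]
  have hq : 1 < Real.sqrt 2 := by
    rw [Real.lt_sqrt (by norm_num)]; norm_num
  have hpos : 0 < b + (δ - s) := by linarith
  refine ⟨by linarith, hpos, ?_⟩
  rw [sub_lt_iff_lt_add, div_lt_iff₀ hpos]
  have h3 : ρ + s - δ ≤ (Real.sqrt 2 - 1) * ε * b := by
    rw [mul_assoc, ← hδ]; linarith
  have hc : 0 < (Real.sqrt 2 - 1) * ε := mul_pos (by linarith) hε
  rcases hsd.eq_or_lt with he | hl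
  · have : ρ = 0 := by
      have : ρ ^ 2 = 0 := by rw [he] at h; linarith
      simpa using this
    rw [this, he]; nlinarith [mul_pos hc hb]
  · nlinarith [mul_pos hc (sub_pos.2 hl)]

/-- Stability of almost umbilical hypersurfaces in Euclidean space (quotient form):
a κ,(1+ε)κ-convex domain fits in a spherical shell with R/r − 1 < (√2 − 1)·ε. -/
theorem stability_quotient_euclidean
    {n : ℕ} (hn : 2 ≤ n) (κ ε : ℝ) (hκ : 0 < κ) (hε : 0 < ε)
    (D : Set (EuclideanSpace ℝ (Fin n)))
    (hDcomp : IsCompact D) (hDconv : Convex ℝ D) (hDint : (interior D).Nonempty)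
    (hsand : ∀ p ∈ frontier D, ∃ x₁ x₂ : EuclideanSpace ℝ (Fin n),
      dist x₁ p = 1 / κ ∧ dist x₂ p = 1 / ((1 + ε) * κ) ∧
      Metric.closedBall x₂ (1 / ((1 + ε) * κ)) ⊆ D ∧ D ⊆ Metric.closedBall x₁ (1 / κ)) :
    ∃ (o : EuclideanSpace ℝ (Fin n)) (r R : ℝ), 0 < r ∧ r ≤ R ∧
      Metric.closedBall o r ⊆ D ∧ D ⊆ Metric.closedBall o R ∧
      R / r - 1 < (Real.sqrt 2 - 1) * ε := by
  haveI : Nonempty (Fin n) := ⟨⟨0, by omega⟩⟩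
  haveI : Nontrivial (EuclideanSpace ℝ (Fin n)) := inferInstance
  have hb : 0 < 1 / ((1 + ε) * κ) := by positivity
  have hab : 1 / κ = 1 / ((1 + ε) * κ) + ε * (1 / ((1 + ε) * κ)) := by field_simp
  generalize 1 / ((1 + ε) * κ) = b at *
  generalize 1 / κ = a at *
  obtain ⟨δ, hδ⟩ : ∃ δ, δ = ε * b := ⟨_, rfl⟩
  rw [← hδ] at hab
  have hδ0 : 0 < δ := by rw [hδ]; positivity
  let K : Set (EuclideanSpace ℝ (Fin n)) := {y | Metric.closedBall y b ⊆ D}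
  have hKD : K ⊆ D := fun y hy => hy (Metric.mem_closedBall_self hb.le)
  have hKeq : K = ⋂ v ∈ Metric.closedBall (0 : EuclideanSpace ℝ (Fin n)) b,
      (fun y => y + v) ⁻¹' D := by
    ext y
    simp only [K, Set.mem_setOf_eq, Set.mem_iInter, Set.mem_preimage]
    constructor
    · intro h v hv
      exact h (by simpa [dist_eq_norm] using hv)
    · intro h z hz
      have := h (z - y) (by simpa [dist_eq_norm] using hz)
      simpa using this
  have hKclosed : IsClosed K := by
    rw [hKeq]
    exact isClosed_biInter fun v _ => hDcomp.isClosed.preimage (by fun_prop)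
  have hKconv : Convex ℝ K := by
    rw [hKeq]
    exact convex_iInter₂ fun v _ => hDconv.translate_preimage_left v
  -- a frontier point
  obtain ⟨c, hc⟩ := hDint
  have hcD := interior_subset hc
  have hne : (frontier D).Nonempty := by
    rw [nonempty_frontier_iff]
    refine ⟨⟨c, hcD⟩, ?_⟩
    intro h
    exact noncompact_univ _ (h ▸ hDcomp)
  have hKx : ∀ x₁, D ⊆ Metric.closedBall x₁ a → ∀ y ∈ K, dist y x₁ ≤ δ := by
    intro x₁ h y hy
    have := ball_in_ball x₁ y a b hb.le (by linarith) (hy.trans h)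
    linarith
  obtain ⟨p₀, hp₀⟩ := hne
  obtain ⟨u₁, u₂, -, -, hu2, hu1⟩ := hsand p₀ hp₀
  obtain ⟨o, ρ, hρ0, hρδ, hoρ, hmin⟩ := exists_min_ball K u₂ hu2 u₁ δ (hKx u₁ hu1)
  -- key estimate
  have key : ∀ x₁, D ⊆ Metric.closedBall x₁ a → dist x₁ o ^ 2 ≤ δ ^ 2 - ρ ^ 2 := by
    intro x h
    have hx := hKx x h
    have ht : ∀ t ∈ Set.Ioo (0:ℝ) 1, (1 - t) * dist x o ^ 2 ≤ δ ^ 2 - ρ ^ 2 := by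
      intro t ⟨ht0, ht1⟩
      have id1 : ∀ y, dist y (o + t • (x - o)) ^ 2 =
          (1 - t) * dist y o ^ 2 + t * dist y x ^ 2 - t * (1 - t) * dist x o ^ 2 := by
        intro y
        have e1 : y - (o + t • (x - o)) = (y - o) - t • (x - o) := by module
        have e2 : y - x = (y - o) - (x - o) := by module
        rw [dist_eq_norm, dist_eq_norm, dist_eq_norm, dist_eq_norm, e1, e2,
          norm_sub_sq_real (y - o) (t • (x - o)), norm_sub_sq_real (y - o) (x - o), norm_smul, inner_smul_right,
          Real.norm_eq_abs, mul_pow, sq_abs]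
        ring
      have hle : ∀ y ∈ K, dist y (o + t • (x - o)) ^ 2 ≤
          (1 - t) * ρ ^ 2 + t * δ ^ 2 - t * (1 - t) * dist x o ^ 2 := by
        intro y hy
        rw [id1]
        have h1 : dist y o ^ 2 ≤ ρ ^ 2 := pow_le_pow_left₀ dist_nonneg (hoρ y hy) 2
        have h2 : dist y x ^ 2 ≤ δ ^ 2 := pow_le_pow_left₀ dist_nonneg (hx y hy) 2
        have h3 := mul_le_mul_of_nonneg_left h1 (sub_pos.2 ht1).le
        have h4 := mul_le_mul_of_nonneg_left h2 ht0.le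
        linarith
      have hm := hmin (o + t • (x - o)) _ (fun y hy => Real.le_sqrt_of_sq_le (hle y hy))
      have h5 := (Real.le_sqrt hρ0 ((sq_nonneg _).trans (hle u₂ hu2))).1 hm
      have h6 : 0 ≤ t * (δ ^ 2 - ρ ^ 2 - (1 - t) * dist x o ^ 2) := by linarith
      have := nonneg_of_mul_nonneg_right h6 ht0
      linarith
    by_contra hcon
    push Not at hcon
    have hW : 0 ≤ δ ^ 2 - ρ ^ 2 := by nlinarith
    have hdp : 0 < dist x o ^ 2 := hW.trans_lt hcon
    have h7 := ht ((dist x o ^ 2 - (δ ^ 2 - ρ ^ 2)) / (2 * dist x o ^ 2))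
      ⟨by apply div_pos <;> linarith, by rw [div_lt_one (by linarith)]; linarith⟩
    have h8 : (1 - (dist x o ^ 2 - (δ ^ 2 - ρ ^ 2)) / (2 * dist x o ^ 2)) * dist x o ^ 2
      = (dist x o ^ 2 + (δ ^ 2 - ρ ^ 2)) / 2 := by
      generalize dist x o ^ 2 = q at *
      field_simp
      ring
    linarith
  -- o ∈ K
  have hoK : o ∈ K := by
    obtain ⟨z, hzK, hz⟩ := exists_norm_eq_iInf_of_complete_convex ⟨u₂, hu2⟩
      hKclosed.isComplete hKconv o
    have hz' := (norm_eq_iInf_iff_real_inner_le_zero hKconv hzK).1 hz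
    have hle : ∀ y ∈ K, dist y z ^ 2 ≤ ρ ^ 2 - ‖o - z‖ ^ 2 := by
      intro y hy
      have h1 := hz' y hy
      have h2 : dist y o ^ 2 ≤ ρ ^ 2 := pow_le_pow_left₀ dist_nonneg (hoρ y hy) 2
      have e : y - o = (y - z) - (o - z) := by module
      rw [dist_eq_norm, e, norm_sub_sq_real, real_inner_comm] at h2
      rw [dist_eq_norm]
      linarith
    have hm := hmin z _ (fun y hy => Real.le_sqrt_of_sq_le (hle y hy))
    have h5 := (Real.le_sqrt hρ0 ((sq_nonneg _).trans (hle u₂ hu2))).1 hm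
    have h6 : ‖o - z‖ ^ 2 = 0 := le_antisymm (by linarith) (sq_nonneg _)
    have h7 : o - z = 0 := by simpa using h6
    rw [sub_eq_zero.1 h7]; exact hzK
  have hoD := hKD hoK
  have hs2 : Real.sqrt (δ ^ 2 - ρ ^ 2) ^ 2 = δ ^ 2 - ρ ^ 2 :=
    Real.sq_sqrt (by nlinarith)
  have hs0 := Real.sqrt_nonneg (δ ^ 2 - ρ ^ 2)
  have key' : ∀ x₁, D ⊆ Metric.closedBall x₁ a → dist x₁ o ≤ Real.sqrt (δ ^ 2 - ρ ^ 2) :=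
    fun x h => Real.le_sqrt_of_sq_le (key x h)
  generalize Real.sqrt (δ ^ 2 - ρ ^ 2) = s at *
  obtain ⟨f1, f2, f3⟩ := final_ineq b δ ρ s ε hb hε hδ hρ0 hs0 hs2
  refine ⟨o, b + (δ - s), b + ρ, f2, f1, ?_, ?_, f3⟩
  · rw [← closure_ball o f2.ne']
    refine closure_minimal ?_ hDcomp.isClosed
    by_contra hcon
    obtain ⟨q, hq, hqD⟩ := Set.not_subset.1 hcon
    obtain ⟨p, hp, hpf⟩ := preconn_frontier hDcomp.isClosed
      (convex_ball o (b + (δ - s))).isPreconnected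
      ⟨o, Metric.mem_ball_self f2, hoD⟩ ⟨q, hq, hqD⟩
    obtain ⟨x₁, x₂, h1, h2, h3, h4⟩ := hsand p hpf
    have h5 := key' x₁ h4
    have h6 := dist_triangle x₁ o p
    rw [Metric.mem_ball, dist_comm] at hp
    linarith
  · intro q hq
    by_contra hcon
    rw [Metric.mem_closedBall, not_le] at hcon
    have hd : 0 < ‖q - o‖ := by rw [← dist_eq_norm]; linarith
    obtain ⟨M, hM⟩ := hDcomp.isBounded.subset_closedBall o
    have hM0 : 0 ≤ M := dist_nonneg.trans (hM hq)
    have hpre : IsPreconnected ((fun t : ℝ => o + t • (q - o)) '' Set.Ici 1) :=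
      isPreconnected_Ici.image _ (by fun_prop)
    have hnorm : ∀ t : ℝ, 1 ≤ t → dist (o + t • (q - o)) o = t * ‖q - o‖ := by
      intro t ht
      rw [dist_eq_norm, add_sub_cancel_left, norm_smul, Real.norm_eq_abs,
        abs_of_nonneg (by linarith)]
    have ht1 : 1 ≤ M / ‖q - o‖ + 1 := by linarith [div_nonneg hM0 hd.le]
    obtain ⟨p, ⟨t, ht, rfl⟩, hpf⟩ := preconn_frontier hDcomp.isClosed hpre
      ⟨q, ⟨1, by simp, by simp⟩, hq⟩
      ⟨_, ⟨M / ‖q - o‖ + 1, ht1, rfl⟩, by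
        intro hmem
        have := hM hmem
        rw [Metric.mem_closedBall, hnorm _ ht1, add_mul, div_mul_cancel₀ _ hd.ne'] at this
        linarith⟩
    obtain ⟨x₁, x₂, h1, h2, h3, h4⟩ := hsand _ hpf
    have h5 := hoρ x₂ h3
    have h6 := dist_triangle_left (o + t • (q - o)) o x₂
    rw [hnorm t ht] at h6
    rw [dist_eq_norm] at hcon
    have : ‖q - o‖ ≤ t * ‖q - o‖ := le_mul_of_one_le_left hd.le ht
    linarith
end

section
/- Let n ≥ 2 and R₁ > 0, and let D be a compact convex body in Euclidean space ℝⁿ such that for every boundary point p ∈ frontier D there exists x with dist x p = R₁ and D ⊆ Metric.closedBall x R₁ (a supporting tangent ball of radius R₁ at every boundary point). Then for any two points A, B ∈ D, every smaller circular arc of radius R₁ joining A and B lies in D; precisely: for every c with dist c A = R₁ and dist c B = R₁, and every point p with dist c p = R₁ for which there exist reals s, t ≥ 0 with p − c = s•(A − c) + t•(B − c), one has p ∈ D. -/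
/-- Lemma: in a κ₁-convex Euclidean domain (supporting tangent ball of radius R₁ = 1/κ₁
at every boundary point), every smaller circular arc of radius R₁ joining two points
of the domain lies in the domain. -/
theorem arc_lemma_euclidean
    {n : ℕ} (hn : 2 ≤ n) (R₁ : ℝ) (hR₁ : 0 < R₁)
    (D : Set (EuclideanSpace ℝ (Fin n)))
    (hDcomp : IsCompact D) (hDconv : Convex ℝ D) (hDint : (interior D).Nonempty)
    (hsupp : ∀ p ∈ frontier D, ∃ x : EuclideanSpace ℝ (Fin n),
      dist x p = R₁ ∧ D ⊆ Metric.closedBall x R₁) :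
    ∀ A ∈ D, ∀ B ∈ D, ∀ c : EuclideanSpace ℝ (Fin n),
      dist c A = R₁ → dist c B = R₁ →
      ∀ p : EuclideanSpace ℝ (Fin n), dist c p = R₁ →
      (∃ s t : ℝ, 0 ≤ s ∧ 0 ≤ t ∧ p - c = s • (A - c) + t • (B - c)) →
      p ∈ D := by
  intro A hA B hB c hcA hcB p hcp ⟨s, t, hs, ht, hp⟩
  by_contra hpD
  obtain ⟨o, ho⟩ := hDint
  obtain ⟨q, hqs, hqf⟩ : (segment ℝ o p ∩ frontier D).Nonempty := by
    have h1 : IsPreconnected (segment ℝ o p) := (convex_segment o p).isPreconnected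
    by_contra hne
    have hne' : segment ℝ o p ∩ frontier D = ∅ := Set.not_nonempty_iff_eq_empty.mp hne
    have hsub : segment ℝ o p ⊆ interior D ∪ Dᶜ := by
      intro y hy
      by_cases hyD : y ∈ D
      · left
        by_contra hyi
        exact hne ⟨y, hy, subset_closure hyD, hyi⟩
      · right; exact hyD
    obtain ⟨y, _, hy1, hy2⟩ := h1 _ _ isOpen_interior hDcomp.isClosed.isOpen_compl hsub
      ⟨o, left_mem_segment ℝ o p, ho⟩ ⟨p, right_mem_segment ℝ o p, hpD⟩
    exact hy2 (interior_subset hy1)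
  obtain ⟨x, hxq, hDx⟩ := hsupp q hqf
  have hqD : q ∈ D := hDcomp.isClosed.frontier_subset hqf
  have hqo : o ≠ q := by
    rintro rfl
    exact hqf.2 ho
  have hqp : p ≠ q := by
    rintro rfl
    exact hpD hqD
  have hqos : q ∈ openSegment ℝ o p := mem_openSegment_of_ne_left_right hqo hqp hqs
  have hoi : o ∈ interior (Metric.closedBall x R₁) := interior_mono hDx ho
  have key : p ∈ Metric.closedBall x R₁ := by
    have hAx := hDx hA
    have hBx := hDx hB
    obtain ⟨a, rfl⟩ : ∃ a, A = c + a := ⟨A - c, by abel⟩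
    obtain ⟨b, rfl⟩ : ∃ b, B = c + b := ⟨B - c, by abel⟩
    obtain ⟨v, rfl⟩ : ∃ v, x = c + v := ⟨x - c, by abel⟩
    obtain ⟨w, rfl⟩ : ∃ w, p = c + w := ⟨p - c, by abel⟩
    simp only [add_sub_cancel_left] at hp
    simp only [dist_self_add_right] at hcA hcB hcp
    simp only [Metric.mem_closedBall, dist_eq_norm, add_sub_add_left_eq_sub] at hAx hBx ⊢
    have hst : 1 ≤ s + t := by
      have h := norm_add_le (s • a) (t • b)
      rw [← hp, norm_smul, norm_smul, hcA, hcB, hcp, Real.norm_of_nonneg hs,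
        Real.norm_of_nonneg ht] at h
      nlinarith
    have ea := norm_sub_sq_real a v
    have eb := norm_sub_sq_real b v
    have ew := norm_sub_sq_real w v
    have hw : inner ℝ w v = s * inner ℝ a v + t * inner ℝ b v := by
      rw [hp, inner_add_left, real_inner_smul_left, real_inner_smul_left]
    have ha2 : ‖a - v‖ ^ 2 ≤ R₁ ^ 2 := by gcongr
    have hb2 : ‖b - v‖ ^ 2 ≤ R₁ ^ 2 := by gcongr
    rw [hcA] at ea
    rw [hcB] at eb
    rw [hcp, hw] at ew
    have h1 : s * ‖v‖ ^ 2 ≤ s * (2 * inner ℝ a v) := by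
      apply mul_le_mul_of_nonneg_left _ hs; linarith
    have h2 : t * ‖v‖ ^ 2 ≤ t * (2 * inner ℝ b v) := by
      apply mul_le_mul_of_nonneg_left _ ht; linarith
    have h3 : 1 * ‖v‖ ^ 2 ≤ (s + t) * ‖v‖ ^ 2 := by gcongr
    refine abs_le_of_sq_le_sq' ?_ hR₁.le |>.2
    nlinarith
  have hqi := (convex_closedBall x R₁).openSegment_interior_self_subset_interior hoi key hqos
  rw [interior_closedBall _ hR₁.ne', Metric.mem_ball, dist_comm] at hqi
  exact hqi.ne hxq
end

section
/- For all real numbers R₁, R₂, r with 0 < R₂ ≤ r ≤ R₁, we have (Real.sqrt ((R₁ − R₂)² − (R₁ − r)²) + R₂) / r ≤ (R₁ + Real.sqrt (2·R₁·R₂)) / (R₂ + Real.sqrt (2·R₁·R₂)). -/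
/-- Euclidean quotient estimate for rounded spindle-shaped hypersurfaces:
for inscribed radius r ∈ [R₂, R₁], the ratio of circumscribed to inscribed radius
is at most (R₁ + √(2R₁R₂))/(R₂ + √(2R₁R₂)). -/
theorem spindle_quotient_euclidean (R₁ R₂ r : ℝ)
    (hR₂ : 0 < R₂) (hr₂ : R₂ ≤ r) (hr₁ : r ≤ R₁) :
    (Real.sqrt ((R₁ - R₂) ^ 2 - (R₁ - r) ^ 2) + R₂) / r ≤
      (R₁ + Real.sqrt (2 * R₁ * R₂)) / (R₂ + Real.sqrt (2 * R₁ * R₂)) := by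
  have ha : 0 < R₁ := by linarith
  have hr : 0 < r := by linarith
  obtain ⟨s, hs⟩ : ∃ s, s = Real.sqrt (2 * R₁ * R₂) := ⟨_, rfl⟩
  have hs0 : 0 ≤ s := hs ▸ Real.sqrt_nonneg _
  have hs2 : s ^ 2 = 2 * R₁ * R₂ := by rw [hs]; exact Real.sq_sqrt (by positivity)
  rw [← hs]
  have ht : 0 < R₂ + s := by linarith
  rw [div_le_div_iff₀ hr ht]
  have hn : 0 ≤ (R₁ + s) * r - R₂ * (R₂ + s) := by
    nlinarith [mul_le_mul (by linarith : R₂ + s ≤ R₁ + s) hr₂ hR₂.le (by linarith)]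
  have key : Real.sqrt ((R₁ - R₂) ^ 2 - (R₁ - r) ^ 2)
      ≤ ((R₁ + s) * r - R₂ * (R₂ + s)) / (R₂ + s) := by
    apply Real.sqrt_le_iff.mpr
    refine ⟨div_nonneg hn ht.le, ?_⟩
    rw [div_pow, le_div_iff₀ (by positivity)]
    have e : ((R₁ + s) * r - R₂ * (R₂ + s)) ^ 2
        - ((R₁ - R₂) ^ 2 - (R₁ - r) ^ 2) * (R₂ + s) ^ 2
        = ((R₁ + R₂ + s) * r - s * (R₂ + s)) ^ 2 := by
      grind
    nlinarith [sq_nonneg ((R₁ + R₂ + s) * r - s * (R₂ + s))]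
  rw [le_div_iff₀ ht] at key
  linarith
end

section
/- For all real numbers R₁, R₂ with 0 < R₂ ≤ R₁, setting r₀ = (2·R₁²·R₂ − R₂·(R₁ − R₂)·Real.sqrt (2·R₁·R₂)) / (R₁² + R₂²), we have R₂ ≤ r₀ ≤ R₁ and (Real.sqrt ((R₁ − R₂)² − (R₁ − r₀)²) + R₂) / r₀ = (R₁ + Real.sqrt (2·R₁·R₂)) / (R₂ + Real.sqrt (2·R₁·R₂)). In other words, the Euclidean quotient bound is attained (the estimate is sharp). -/
/-- Sharpness of the Euclidean quotient estimate: the bound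
(R₁ + √(2R₁R₂))/(R₂ + √(2R₁R₂)) is attained at
r₀ = (2R₁²R₂ − R₂(R₁ − R₂)√(2R₁R₂))/(R₁² + R₂²). -/
theorem spindle_quotient_euclidean_sharp (R₁ R₂ : ℝ)
    (hR₂ : 0 < R₂) (hR₂₁ : R₂ ≤ R₁) :
    R₂ ≤ (2 * R₁ ^ 2 * R₂ - R₂ * (R₁ - R₂) * Real.sqrt (2 * R₁ * R₂)) / (R₁ ^ 2 + R₂ ^ 2) ∧
    (2 * R₁ ^ 2 * R₂ - R₂ * (R₁ - R₂) * Real.sqrt (2 * R₁ * R₂)) / (R₁ ^ 2 + R₂ ^ 2) ≤ R₁ ∧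
    (Real.sqrt ((R₁ - R₂) ^ 2 -
        (R₁ - (2 * R₁ ^ 2 * R₂ - R₂ * (R₁ - R₂) * Real.sqrt (2 * R₁ * R₂)) /
          (R₁ ^ 2 + R₂ ^ 2)) ^ 2) + R₂) /
      ((2 * R₁ ^ 2 * R₂ - R₂ * (R₁ - R₂) * Real.sqrt (2 * R₁ * R₂)) / (R₁ ^ 2 + R₂ ^ 2)) =
    (R₁ + Real.sqrt (2 * R₁ * R₂)) / (R₂ + Real.sqrt (2 * R₁ * R₂)) := by
  have ha : 0 < R₁ := lt_of_lt_of_le hR₂ hR₂₁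
  have hs : 0 < Real.sqrt (2 * R₁ * R₂) := Real.sqrt_pos.mpr (by positivity)
  have hs2 : Real.sqrt (2 * R₁ * R₂) ^ 2 = 2 * R₁ * R₂ := Real.sq_sqrt (by positivity)
  generalize Real.sqrt (2 * R₁ * R₂) = s at hs hs2 ⊢
  have hd : 0 ≤ R₁ - R₂ := sub_nonneg.mpr hR₂₁
  have hD : 0 < R₁ + R₂ + s := by positivity
  have hr : (2 * R₁ ^ 2 * R₂ - R₂ * (R₁ - R₂) * s) / (R₁ ^ 2 + R₂ ^ 2)
      = s * (R₂ + s) / (R₁ + R₂ + s) := by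
    rw [div_eq_div_iff (by positivity) (by positivity)]
    linear_combination (-R₂ * (R₁ - R₂) - R₁ ^ 2 - R₂ ^ 2) * hs2
  rw [hr]
  have h1 : s * (R₂ + s) / (R₁ + R₂ + s) - R₂ = R₂ * (R₁ - R₂) / (R₁ + R₂ + s) := by
    field_simp
    linear_combination hs2
  have h2 : R₁ - s * (R₂ + s) / (R₁ + R₂ + s)
      = (R₁ - R₂) * (R₁ + s) / (R₁ + R₂ + s) := by
    field_simp
    linear_combination -hs2
  have h3 : (R₁ - R₂) ^ 2 - ((R₁ - R₂) * (R₁ + s) / (R₁ + R₂ + s)) ^ 2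
      = ((R₁ - R₂) * (R₂ + s) / (R₁ + R₂ + s)) ^ 2 := by
    field_simp
    linear_combination (-(R₁ - R₂) ^ 2) * hs2
  refine ⟨?_, ?_, ?_⟩
  · have : 0 ≤ R₂ * (R₁ - R₂) / (R₁ + R₂ + s) := by positivity
    linarith
  · have : 0 ≤ (R₁ - R₂) * (R₁ + s) / (R₁ + R₂ + s) := by positivity
    linarith
  · rw [h2, h3, Real.sqrt_sq (by positivity)]
    have h4 : (R₁ - R₂) * (R₂ + s) / (R₁ + R₂ + s) + R₂
        = s * (R₁ + s) / (R₁ + R₂ + s) := by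
      field_simp
      linear_combination -hs2
    rw [h4]
    field_simp
end

section
/- For all real numbers R₁, R₂, r with 0 ≤ R₂ ≤ r ≤ R₁ < π/2, we have Real.arccos (Real.cos (R₁ − R₂) / Real.cos (R₁ − r)) + R₂ − r ≤ 2 · Real.arccos (Real.sqrt (Real.cos (R₁ − R₂))) − (R₁ − R₂). -/
/-- Spherical (c = 1) width estimate for rounded spindle-shaped hypersurfaces on the
unit sphere: for inscribed radius r ∈ [R₂, R₁] ⊆ [0, π/2), the width of the spherical
shell is at most 2·arccos √(cos(R₁ − R₂)) − (R₁ − R₂). -/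
theorem spindle_width_spherical (R₁ R₂ r : ℝ)
    (hR₂ : 0 ≤ R₂) (hr₂ : R₂ ≤ r) (hr₁ : r ≤ R₁) (hR₁ : R₁ < Real.pi / 2) :
    Real.arccos (Real.cos (R₁ - R₂) / Real.cos (R₁ - r)) + R₂ - r ≤
      2 * Real.arccos (Real.sqrt (Real.cos (R₁ - R₂))) - (R₁ - R₂) := by
  have hx0 : 0 ≤ R₁ - r := by linarith
  have hD : R₁ - R₂ < Real.pi / 2 := by linarith
  have hxD : R₁ - r ≤ R₁ - R₂ := by linarith
  have hcx : 0 < Real.cos (R₁ - r) := Real.cos_pos_of_mem_Ioo ⟨by linarith [Real.pi_pos], by linarith⟩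
  have hcD : 0 < Real.cos (R₁ - R₂) := Real.cos_pos_of_mem_Ioo ⟨by linarith [Real.pi_pos], hD⟩
  have hle : Real.cos (R₁ - R₂) ≤ Real.cos (R₁ - r) :=
    Real.cos_le_cos_of_nonneg_of_le_pi hx0 (by linarith [Real.pi_pos]) hxD
  have hq0 : 0 ≤ Real.cos (R₁ - R₂) / Real.cos (R₁ - r) := by positivity
  have hq1 : Real.cos (R₁ - R₂) / Real.cos (R₁ - r) ≤ 1 := (div_le_one hcx).2 hle
  have hca := Real.cos_arccos (by linarith) hq1
  have ha0 := Real.arccos_nonneg (Real.cos (R₁ - R₂) / Real.cos (R₁ - r))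
  have ha1 := Real.arccos_le_pi_div_two.2 hq0
  generalize Real.arccos (Real.cos (R₁ - R₂) / Real.cos (R₁ - r)) = a at *
  have hprod : Real.cos a * Real.cos (R₁ - r) = Real.cos (R₁ - R₂) := by
    rw [hca]; field_simp
  generalize hx : R₁ - r = x at *
  have hch : 0 ≤ Real.cos ((a + x) / 2) :=
    Real.cos_nonneg_of_mem_Icc ⟨by linarith [Real.pi_pos], by linarith⟩
  have hsq : Real.cos (R₁ - R₂) ≤ Real.cos ((a + x) / 2) ^ 2 := by
    rw [Real.cos_sq, show 2 * ((a + x) / 2) = a + x by ring, Real.cos_add, ← hprod]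
    have := Real.cos_le_one (a - x)
    rw [Real.cos_sub] at this
    linarith
  have hs : Real.sqrt (Real.cos (R₁ - R₂)) ≤ Real.cos ((a + x) / 2) :=
    Real.sqrt_le_iff.2 ⟨hch, hsq⟩
  have h := Real.arccos_le_arccos hs
  rw [Real.arccos_cos (by linarith) (by linarith)] at h
  linarith
end

section
/- For all real numbers R₁, R₂ with 0 ≤ R₂ ≤ R₁ < π/2, setting a = Real.arccos (Real.sqrt (Real.cos (R₁ − R₂))) and r = R₁ − a, we have R₂ ≤ r ≤ R₁ and Real.arccos (Real.cos (R₁ − R₂) / Real.cos (R₁ − r)) + R₂ − r = 2·a − (R₁ − R₂). In other words, the spherical width bound is attained (the estimate is sharp). -/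
/-- Sharpness of the spherical width estimate: the bound 2a − (R₁ − R₂) where
a = arccos √(cos(R₁ − R₂)) is attained at r = R₁ − a. -/
theorem spindle_width_spherical_sharp (R₁ R₂ : ℝ)
    (hR₂ : 0 ≤ R₂) (hR₂₁ : R₂ ≤ R₁) (hR₁ : R₁ < Real.pi / 2) :
    R₂ ≤ R₁ - Real.arccos (Real.sqrt (Real.cos (R₁ - R₂))) ∧
    R₁ - Real.arccos (Real.sqrt (Real.cos (R₁ - R₂))) ≤ R₁ ∧
    Real.arccos (Real.cos (R₁ - R₂) /
        Real.cos (R₁ - (R₁ - Real.arccos (Real.sqrt (Real.cos (R₁ - R₂)))))) + R₂ -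
      (R₁ - Real.arccos (Real.sqrt (Real.cos (R₁ - R₂)))) =
    2 * Real.arccos (Real.sqrt (Real.cos (R₁ - R₂))) - (R₁ - R₂) := by
  have hc : 0 < Real.cos (R₁ - R₂) :=
    Real.cos_pos_of_mem_Ioo ⟨by linarith [Real.pi_pos], by linarith⟩
  have hc1 : Real.cos (R₁ - R₂) ≤ 1 := Real.cos_le_one _
  have hs1 : Real.sqrt (Real.cos (R₁ - R₂)) ≤ 1 := Real.sqrt_le_one.mpr hc1
  have hs0 : 0 ≤ Real.sqrt (Real.cos (R₁ - R₂)) := Real.sqrt_nonneg _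
  have hle : Real.cos (R₁ - R₂) ≤ Real.sqrt (Real.cos (R₁ - R₂)) :=
    Real.le_sqrt_of_sq_le (by nlinarith)
  have h1 : Real.arccos (Real.sqrt (Real.cos (R₁ - R₂))) ≤ R₁ - R₂ := by
    have h := Real.arccos_le_arccos hle
    rwa [Real.arccos_cos (by linarith) (by linarith [Real.pi_pos])] at h
  refine ⟨by linarith, by linarith [Real.arccos_nonneg (Real.sqrt (Real.cos (R₁ - R₂)))], ?_⟩
  rw [sub_sub_cancel, Real.cos_arccos (by linarith) hs1, Real.div_sqrt]
  ring
end

section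
/- Let R₁, R₂, r, V, a be real numbers with 0 ≤ R₂ ≤ r ≤ R₁, V ≥ 0, a ≥ 0, such that Real.cosh V · Real.cosh (R₁ − r) = Real.cosh (R₁ − R₂) and (Real.cosh a)² = Real.cosh (R₁ − R₂). Then V + R₂ − r ≤ 2·a − (R₁ − R₂). -/
/-- Hyperbolic (c = −1) width estimate for rounded spindle-shaped hypersurfaces,
stated implicitly via cosh: if cosh V · cosh(R₁ − r) = cosh(R₁ − R₂) and
cosh² a = cosh(R₁ − R₂) with V, a ≥ 0, then the width V + R₂ − r is at most
2a − (R₁ − R₂). -/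
theorem spindle_width_hyperbolic (R₁ R₂ r V a : ℝ)
    (hR₂ : 0 ≤ R₂) (hr₂ : R₂ ≤ r) (hr₁ : r ≤ R₁)
    (hV : 0 ≤ V) (ha : 0 ≤ a)
    (hVdef : Real.cosh V * Real.cosh (R₁ - r) = Real.cosh (R₁ - R₂))
    (hadef : (Real.cosh a) ^ 2 = Real.cosh (R₁ - R₂)) :
    V + R₂ - r ≤ 2 * a - (R₁ - R₂) := by
  have h1 := Real.cosh_add V (R₁ - r)
  have h2 := Real.cosh_sub V (R₁ - r)
  have h3 := Real.one_le_cosh (V - (R₁ - r))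
  have h4 := Real.cosh_two_mul a
  have h5 := Real.cosh_sq a
  have h6 : Real.cosh (V + (R₁ - r)) ≤ Real.cosh (2 * a) := by linarith
  rw [Real.cosh_le_cosh, abs_of_nonneg (by linarith), abs_of_nonneg (by linarith)] at h6
  linarith
end
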